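/- For n ≤ m and any ε ≥ 0 with (1+ε)t ≤ n, the capacity of the additive-multiplicative matrix channel Y = A(X+W) is lower bounded by C ≥ (m-n)(n - t - εt) - log_q 4 - 2tnm/q^{1+εt}, achieved by choosing X uniformly among n×m matrices of rank n - (1+ε)t. -/

import Mathlib

open scoped BigOperators

/-- Mutual information (logarithm base `b`) between the input and output of a discrete
memoryless channel with finite input alphabet `α`, finite output alphabet `β`, transition
probabilities `K` and input distribution `p`. -/
noncomputable def mutualInfoB {α β : Type*} [Fintype α] [Fintype β]
    (b : ℝ) (p : α → ℝ) (K : α → β → ℝ) : ℝ :=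
  ∑ x : α, ∑ y : β, p x * K x y *
    Real.logb b (K x y / ∑ x' : α, p x' * K x' y)

/-- The capacity (in base-`b` units) of a discrete channel with transition probabilities `K`:
the supremum of the mutual information over all input distributions. -/
noncomputable def capacityB {α β : Type*} [Fintype α] [Fintype β]
    (b : ℝ) (K : α → β → ℝ) : ℝ :=
  sSup {c : ℝ | ∃ p : α → ℝ, (∀ x, 0 ≤ p x) ∧ (∑ x : α, p x) = 1 ∧ c = mutualInfoB b p K}


/-- Transition probabilities of the additive-multiplicative matrix channel `Y = A(X + W)`,
where `A` is uniform over `GL_n(F_q)` and `W` is uniform over the `n × m` matrices of rank `t`,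
independent of each other and of `X`. -/
noncomputable def ammcKernel (F : Type) [Field F] [Fintype F] (n m t : ℕ)
    (X Y : Matrix (Fin n) (Fin m) F) : ℝ :=
  (Nat.card {p : Matrix.GeneralLinearGroup (Fin n) F ×
        {W : Matrix (Fin n) (Fin m) F // W.rank = t} //
      (p.1 : Matrix (Fin n) (Fin n) F) * (X + (p.2 : Matrix (Fin n) (Fin m) F)) = Y} : ℝ) /
    ((Nat.card (Matrix.GeneralLinearGroup (Fin n) F) : ℝ) *
      (Nat.card {W : Matrix (Fin n) (Fin m) F // W.rank = t} : ℝ))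

/-!
Information is bounded below by Gibbs' variational principle: any function `g` of the input and the
output whose mean over the input is at most `1` satisfies `E[log g(X, Y)] ≤ I(X; Y)`. For `X`
uniform of rank `k` take `g` to be the number of linearly independent `b`-tuples common to the row
spaces of `X` and `Y`, where `b = rank Y - t`, divided by its mean over `X`. Since
`dim (row X + row Y) ≤ k + t`, this gives `g ≥ q ^ ((m - k - t) * b) / 4`, the factor `4` bounding
the products `∏ (1 - q⁻ⁱ)⁻¹`.

It remains to bound `E[b] = E[rank (X + W)] - t`. Bernoulli's inequality turns a bound on the mean
of `q ^ (n - rank (X + W))`, the size of the left kernel of `X + W`, into one on the mean rank, and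
that size is computed vector by vector because `W` is invariant under `GL` on both sides. With
`k = n - t - j` and `j = ⌊εt⌋` the rank is lower than `k + t` by at most `3 / q ^ (j + 1)` on
average. The fractional part `y` of `εt` costs `(m - n) * y` in the claimed rate, and AM-GM in the
form `q ^ y + 4 / q ^ y ≥ 4` balances it against the slack `2tnm / q ^ (1 + εt)`.
-/

section MutualInformation

theorem sub_le_mul_log_div {a b : ℝ} (ha : 0 ≤ a) (hb : 0 ≤ b) (hab : b = 0 → a = 0) :
    a - b ≤ a * Real.log (a / b) := by
  obtain rfl | ha := ha.eq_or_lt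
  · simpa using hb
  have hb : 0 < b := hb.lt_of_ne fun h => ha.ne' (hab h.symm)
  calc a - b = a * (1 - (a / b)⁻¹) := by field_simp
    _ ≤ a * Real.log (a / b) := by
        gcongr
        exact Real.one_sub_inv_le_log_of_pos (div_pos ha hb)

variable {α β : Type*} [Fintype α] {b : ℝ} {p : α → ℝ} {K : α → β → ℝ}

theorem mul_le_sum_mul (hp : ∀ x, 0 ≤ p x) (hK : ∀ x y, 0 ≤ K x y) (x : α) (y : β) :
    p x * K x y ≤ ∑ x', p x' * K x' y :=
  Finset.single_le_sum (f := fun x => p x * K x y) (fun x _ => mul_nonneg (hp x) (hK x y))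
    (Finset.mem_univ x)

variable [Fintype β]

/-- Gibbs' variational principle: `g x y` plays the role of the density of the joint law of input
and output with respect to the product of its marginals, whose expected logarithm is the mutual
information. -/
theorem sum_mul_logb_le_mutualInfoB (hb : 1 < b) (hp : ∀ x, 0 ≤ p x) (hK : ∀ x y, 0 ≤ K x y)
    {g : α → β → ℝ} (hg : ∀ x y, 0 ≤ g x y) (hg0 : ∀ x y, p x ≠ 0 → K x y ≠ 0 → g x y ≠ 0)
    (hg1 : ∀ y, ∑ x, p x * g x y ≤ 1) :
    ∑ x, ∑ y, p x * K x y * Real.logb b (g x y) ≤ mutualInfoB b p K := by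
  have hlog : 0 < Real.log b := Real.log_pos hb
  let Q y := ∑ x, p x * K x y
  have hQ y : 0 ≤ Q y := Finset.sum_nonneg fun x _ => mul_nonneg (hp x) (hK x y)
  have pointwise x y : p x * K x y * Real.logb b (g x y) +
      (p x * K x y - Q y * (p x * g x y)) / Real.log b ≤
        p x * K x y * Real.logb b (K x y / Q y) := by
    have hR : 0 ≤ Q y * (p x * g x y) := mul_nonneg (hQ y) (mul_nonneg (hp x) (hg x y))
    by_cases h0 : p x * K x y = 0
    · simpa [h0] using div_nonpos_of_nonpos_of_nonneg (neg_nonpos.2 hR) hlog.le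
    obtain ⟨hpx, hKxy⟩ := mul_ne_zero_iff.1 h0
    have hgxy : g x y ≠ 0 := hg0 x y hpx hKxy
    have hQy : Q y ≠ 0 :=
      (((mul_nonneg (hp x) (hK x y)).lt_of_ne' h0).trans_le (mul_le_sum_mul hp hK x y)).ne'
    have gibbs := sub_le_mul_log_div (mul_nonneg (hp x) (hK x y)) hR
      fun h => absurd h (mul_ne_zero hQy (mul_ne_zero hpx hgxy))
    have density : p x * K x y / (Q y * (p x * g x y)) = K x y / Q y / g x y := by field_simp
    rw [density, Real.log_div (div_ne_zero hKxy hQy) hgxy] at gibbs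
    rw [Real.logb, Real.logb, mul_div_assoc', mul_div_assoc', ← add_div]
    gcongr
    linarith
  have total : 0 ≤ ∑ x, ∑ y, (p x * K x y - Q y * (p x * g x y)) / Real.log b := by
    rw [Finset.sum_comm]
    refine Finset.sum_nonneg fun y _ => ?_
    rw [← Finset.sum_div, Finset.sum_sub_distrib, ← Finset.mul_sum]
    exact div_nonneg (sub_nonneg.2 (mul_le_of_le_one_right (hQ y) (hg1 y))) hlog.le
  have summed := Finset.sum_le_sum fun x (_ : x ∈ Finset.univ) =>
    Finset.sum_le_sum fun y (_ : y ∈ Finset.univ) => pointwise x y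
  simp only [Finset.sum_add_distrib] at summed
  exact (le_add_of_nonneg_right total).trans summed

theorem mutualInfoB_le (hb : 1 < b) (hp : ∀ x, 0 ≤ p x) (hK : ∀ x y, 0 ≤ K x y) :
    mutualInfoB b p K ≤ ∑ x, ∑ y, K x y / Real.log b := by
  refine Finset.sum_le_sum fun x _ => Finset.sum_le_sum fun y _ => ?_
  let Q := ∑ x', p x' * K x' y
  have hpK : 0 ≤ p x * K x y := mul_nonneg (hp x) (hK x y)
  have hQ : p x * K x y ≤ Q := mul_le_sum_mul hp hK x y
  have hKQ : 0 ≤ K x y / Q := div_nonneg (hK x y) (hpK.trans hQ)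
  rw [Real.logb, mul_div_assoc']
  refine div_le_div_of_nonneg_right ?_ (Real.log_pos hb).le
  calc p x * K x y * Real.log (K x y / Q)
      ≤ p x * K x y * (K x y / Q) := by gcongr; exact Real.log_le_self hKQ
    _ ≤ Q * (K x y / Q) := by gcongr
    _ = K x y * (Q / Q) := mul_div_left_comm ..
    _ ≤ K x y := mul_le_of_le_one_right (hK x y) (div_self_le_one Q)

theorem mutualInfoB_le_capacityB (hb : 1 < b) (hp : ∀ x, 0 ≤ p x) (hp1 : ∑ x, p x = 1)
    (hK : ∀ x y, 0 ≤ K x y) : mutualInfoB b p K ≤ capacityB b K := by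
  refine le_csSup ⟨∑ x, ∑ y, K x y / Real.log b, ?_⟩ ⟨p, hp, hp1, rfl⟩
  rintro _ ⟨p', hp', -, rfl⟩
  exact mutualInfoB_le hb hp' hK

end MutualInformation

section FrameCount

/-- The number of linearly independent `b`-tuples of vectors in a space of dimension `a` over the
field with `q` elements; it vanishes for `a < b`. -/
def frameCount (q : ℝ) (a b : ℕ) : ℝ := ∏ i ∈ Finset.range b, (q ^ a - q ^ i)

variable {q : ℝ} {a b : ℕ}

theorem frameCount_eq_zero (h : a < b) : frameCount q a b = 0 :=
  Finset.prod_eq_zero (Finset.mem_range.2 h) (sub_self _)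

theorem pow_sub_pow_nonneg_of_mem_range (hq : 1 ≤ q) (h : b ≤ a) {i : ℕ}
    (hi : i ∈ Finset.range b) : 0 ≤ q ^ a - q ^ i :=
  sub_nonneg.2 (pow_le_pow_right₀ hq ((Finset.mem_range.1 hi).le.trans h))

theorem frameCount_nonneg (hq : 1 ≤ q) (a b : ℕ) : 0 ≤ frameCount q a b := by
  obtain h | h := le_or_gt b a
  · exact Finset.prod_nonneg fun i => pow_sub_pow_nonneg_of_mem_range hq h
  · exact (frameCount_eq_zero h).ge

theorem frameCount_pos (hq : 1 < q) (h : b ≤ a) : 0 < frameCount q a b :=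
  Finset.prod_pos fun _ hi =>
    sub_pos.2 (pow_lt_pow_right₀ hq ((Finset.mem_range.1 hi).trans_le h))

theorem frameCount_le_pow (hq : 1 ≤ q) (h : b ≤ a) : frameCount q a b ≤ q ^ (a * b) := by
  calc frameCount q a b ≤ ∏ _i ∈ Finset.range b, q ^ a :=
        Finset.prod_le_prod (fun i => pow_sub_pow_nonneg_of_mem_range hq h)
          fun i _ => sub_le_self _ (by positivity)
    _ = q ^ (a * b) := by rw [Finset.prod_const, Finset.card_range, pow_mul]

theorem pow_mul_frameCount_le (hq : 1 ≤ q) (h : b ≤ a) (c : ℕ) :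
    q ^ (c * b) * frameCount q a b ≤ frameCount q (a + c) b := by
  calc q ^ (c * b) * frameCount q a b = ∏ i ∈ Finset.range b, q ^ c * (q ^ a - q ^ i) := by
        rw [frameCount, Finset.prod_mul_distrib, Finset.prod_const, Finset.card_range, pow_mul]
    _ ≤ frameCount q (a + c) b := by
        refine Finset.prod_le_prod (fun i hi => mul_nonneg (by positivity)
          (pow_sub_pow_nonneg_of_mem_range hq h hi)) fun i _ => ?_
        rw [mul_sub, ← pow_add, add_comm c a]
        gcongr
        exact le_mul_of_one_le_left (by positivity) (one_le_pow₀ hq)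

/-- A truncation of Euler's pentagonal number theorem. -/
theorem one_sub_sub_sq_add_pow_le_prod {x : ℝ} (hx0 : 0 ≤ x) (hx1 : x ≤ 1) (b : ℕ) :
    1 - x - x ^ 2 + x ^ (b + 2) ≤ ∏ i ∈ Finset.range (b + 1), (1 - x ^ (i + 1)) := by
  induction b with
  | zero => simp
  | succ b ih =>
    rw [Finset.prod_range_succ]
    have hpow : x ^ (b + 2) ≤ x ^ 2 := pow_le_pow_of_le_one hx0 hx1 (by omega)
    calc 1 - x - x ^ 2 + x ^ (b + 1 + 2)
        ≤ (1 - x - x ^ 2 + x ^ (b + 2)) * (1 - x ^ (b + 2)) := by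
          have : 0 ≤ x ^ (b + 2) * (x ^ 2 - x ^ (b + 2)) :=
            mul_nonneg (by positivity) (sub_nonneg.2 hpow)
          linear_combination this
      _ ≤ _ := by
          gcongr
          exact sub_nonneg.2 (pow_le_one₀ hx0 hx1)

theorem one_fourth_le_prod_one_sub_pow {x : ℝ} (hx0 : 0 ≤ x) (hx : x ≤ 1 / 2) (b : ℕ) :
    1 / 4 ≤ ∏ i ∈ Finset.range b, (1 - x ^ (i + 1)) := by
  cases b with
  | zero => norm_num
  | succ b =>
    refine le_trans ?_ (one_sub_sub_sq_add_pow_le_prod hx0 (hx.trans (by norm_num)) b)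
    have : 0 ≤ x ^ (b + 2) := by positivity
    nlinarith

theorem pow_le_four_mul_frameCount (hq : 2 ≤ q) (h : b ≤ a) :
    q ^ (a * b) ≤ 4 * frameCount q a b := by
  have hq1 : 1 ≤ q := by linarith
  have hinv : 1 / 4 ≤ ∏ i ∈ Finset.range b, (1 - q⁻¹ ^ (i + 1)) :=
    one_fourth_le_prod_one_sub_pow (by positivity) (by rw [one_div]; gcongr) b
  have hfactor : q ^ (a * b) * ∏ i ∈ Finset.range b, (1 - q⁻¹ ^ (i + 1)) ≤ frameCount q a b := by
    rw [pow_mul, ← Finset.card_range b, ← Finset.prod_const, Finset.card_range,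
      ← Finset.prod_mul_distrib, frameCount, ← Finset.prod_range_reflect]
    refine Finset.prod_le_prod (fun i _ => ?_) fun i hi => ?_
    · have : q⁻¹ ^ (b - 1 - i + 1) ≤ 1 := pow_le_one₀ (by positivity) (inv_le_one_of_one_le₀ hq1)
      exact mul_nonneg (by positivity) (sub_nonneg.2 this)
    · have hi := Finset.mem_range.1 hi
      have : q ^ i ≤ q ^ a * q⁻¹ ^ (b - 1 - i + 1) := by
        rw [inv_pow, ← div_eq_mul_inv, le_div_iff₀ (by positivity), ← pow_add]
        exact pow_le_pow_right₀ hq1 (by omega)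
      linarith
  have : 0 < q ^ (a * b) := by positivity
  nlinarith

end FrameCount

section Frames

variable {F E : Type*} [Field F] [AddCommGroup E] [Module F E]

theorem exists_linearEquiv_forall_apply_eq [FiniteDimensional F E] {ι : Type*} {v w : ι → E}
    (hv : LinearIndependent F v) (hw : LinearIndependent F w) :
    ∃ g : E ≃ₗ[F] E, ∀ i, g (v i) = w i := by
  obtain ⟨g, hg⟩ := Submodule.exists_linearEquiv_restrict_eq
    (hv.linearCombinationEquiv.symm ≪≫ₗ hw.linearCombinationEquiv)
  refine ⟨g, fun i => ?_⟩
  have hvi : v i = hv.linearCombinationEquiv (Finsupp.single i 1) := by simp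
  rw [hvi, ← hg]
  simp

variable [Fintype E]

open Classical in
/-- The linearly independent `b`-tuples of vectors of a subspace. -/
noncomputable def frames (U : Submodule F E) (b : ℕ) : Finset (Fin b → E) :=
  {v | LinearIndependent F v ∧ ∀ i, v i ∈ U}

theorem mem_frames {U : Submodule F E} {b : ℕ} {v : Fin b → E} :
    v ∈ frames U b ↔ LinearIndependent F v ∧ ∀ i, v i ∈ U := by
  simp [frames]

theorem mem_frames_inf {U V : Submodule F E} {b : ℕ} {v : Fin b → E} :
    v ∈ frames (U ⊓ V) b ↔ v ∈ frames U b ∧ ∀ i, v i ∈ V := by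
  simp only [mem_frames, Submodule.mem_inf, forall_and, and_assoc]

/-- The frames of `U`, viewed as linearly independent tuples in the space `U` itself. -/
noncomputable def linearIndependentEquivFrames (U : Submodule F E) (b : ℕ) :
    {s : Fin b → U // LinearIndependent F s} ≃ frames U b where
  toFun s := ⟨fun i => s.1 i, mem_frames.2
    ⟨s.2.map' U.subtype U.ker_subtype, fun i => (s.1 i).2⟩⟩
  invFun v := ⟨fun i => ⟨v.1 i, (mem_frames.1 v.2).2 i⟩, .of_comp U.subtype (mem_frames.1 v.2).1⟩

variable [Fintype F]

local notation "q" => (Fintype.card F : ℝ)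

theorem card_frames (U : Submodule F E) (b : ℕ) :
    ((frames U b).card : ℝ) = frameCount q (Module.finrank F U) b := by
  obtain h | h := le_or_gt b (Module.finrank F U)
  · have hcard := card_linearIndependent (K := F) h
    rw [Nat.card_congr (linearIndependentEquivFrames U b), Nat.card_eq_fintype_card,
      Fintype.card_coe] at hcard
    rw [hcard, frameCount, Nat.cast_prod, ← Fin.prod_univ_eq_prod_range]
    refine Finset.prod_congr rfl fun i _ => ?_
    rw [Nat.cast_sub (Nat.pow_le_pow_right Fintype.card_pos (i.2.le.trans h)), Nat.cast_pow,
      Nat.cast_pow]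
  · have hempty : frames U b = ∅ := Finset.eq_empty_of_forall_notMem fun v hv => h.not_ge <| by
      simpa using ((linearIndependentEquivFrames U b).symm ⟨v, hv⟩).2.fintype_card_le_finrank
    rw [hempty, frameCount_eq_zero h, Finset.card_empty, Nat.cast_zero]

end Frames

section FrameRatio

variable {F E : Type*} [Field F] [Fintype F] [AddCommGroup E] [Module F E]

local notation "q" => (Fintype.card F : ℝ)

/-- The number of `b`-frames common to `U` and `V`, divided by its average over all subspaces `U`
of the same dimension. When there are no such frames the ratio is `0`, possibly as `0 / 0`. -/
noncomputable def frameRatio (U V : Submodule F E) (b : ℕ) : ℝ :=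
  frameCount q (Module.finrank F ↥(U ⊓ V)) b * frameCount q (Module.finrank F E) b /
    (frameCount q (Module.finrank F U) b * frameCount q (Module.finrank F V) b)

theorem two_le_card {α : Type*} [Fintype α] [Nontrivial α] : (2 : ℝ) ≤ Fintype.card α := by
  exact_mod_cast Fintype.one_lt_card (α := α)

theorem frameRatio_nonneg (U V : Submodule F E) (b : ℕ) : 0 ≤ frameRatio U V b := by
  have hq : 1 ≤ q := one_le_two.trans two_le_card
  have hcount a : 0 ≤ frameCount q a b := frameCount_nonneg hq a b
  exact div_nonneg (mul_nonneg (hcount _) (hcount _)) (mul_nonneg (hcount _) (hcount _))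

theorem pow_div_four_le_frameRatio [FiniteDimensional F E] {U V : Submodule F E} {b : ℕ}
    (hb : b ≤ Module.finrank F ↥(U ⊓ V)) :
    q ^ ((Module.finrank F E - Module.finrank F ↥(U ⊔ V)) * b) / 4 ≤ frameRatio U V b := by
  have hq2 : 2 ≤ q := two_le_card
  have hq : 1 < q := by linarith
  have hU := hb.trans (Submodule.finrank_mono (inf_le_left : U ⊓ V ≤ U))
  have hV := hb.trans (Submodule.finrank_mono (inf_le_right : U ⊓ V ≤ V))
  have hUE := U.finrank_le
  have hsup := (U ⊔ V).finrank_le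
  have hdim := Submodule.finrank_sup_add_finrank_inf_eq U V
  unfold frameRatio
  generalize Module.finrank F U = u at *
  generalize Module.finrank F V = v at *
  generalize Module.finrank F E = e at *
  generalize Module.finrank F ↥(U ⊓ V) = d at *
  generalize Module.finrank F ↥(U ⊔ V) = s at *
  have hu := frameCount_pos hq hU
  have hv := frameCount_pos hq hV
  rw [div_le_div_iff₀ four_pos (mul_pos hu hv)]
  calc q ^ ((e - s) * b) * (frameCount q u b * frameCount q v b)
      ≤ q ^ ((e - s) * b) * (frameCount q u b * q ^ (v * b)) := by
        gcongr
        exact frameCount_le_pow hq.le hV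
    _ = q ^ (d * b) * (q ^ ((e - u) * b) * frameCount q u b) := by
        rw [mul_left_comm, ← pow_add, mul_left_comm, ← mul_assoc (q ^ _), ← pow_add, ← add_mul,
          ← add_mul, show e - s + v = d + (e - u) by omega]
        ring
    _ ≤ 4 * frameCount q d b * frameCount q (u + (e - u)) b :=
        mul_le_mul (pow_le_four_mul_frameCount hq2 hb) (pow_mul_frameCount_le hq.le hU _)
          (by positivity) (mul_nonneg four_pos.le (frameCount_nonneg hq.le _ _))
    _ = frameCount q d b * frameCount q e b * 4 := by
        rw [Nat.add_sub_cancel' hUE]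
        ring

end FrameRatio

section RowSpace

open Matrix
open scoped MatrixGroups

variable {ι κ F : Type*} [Field F]

theorem rank_mul_GL [Fintype κ] [DecidableEq κ] (M : Matrix ι κ F) (S : GL κ F) :
    (M * (S : Matrix κ κ F)).rank = M.rank :=
  rank_mul_eq_left_of_isUnit_det _ _ ((isUnit_iff_isUnit_det _).1 S.isUnit)

theorem rank_GL_mul [Fintype ι] [DecidableEq ι] [Fintype κ] (S : GL ι F) (M : Matrix ι κ F) :
    ((S : Matrix ι ι F) * M).rank = M.rank :=
  rank_mul_eq_right_of_isUnit_det _ _ ((isUnit_iff_isUnit_det _).1 S.isUnit)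

theorem eq_zero_of_rank_eq_zero [Fintype κ] {M : Matrix ι κ F} (h : M.rank = 0) : M = 0 := by
  classical
  rw [rank, Submodule.finrank_eq_zero, LinearMap.range_eq_bot] at h
  exact (LinearEquiv.map_eq_zero_iff toLin').1 h

theorem rank_add_le [Fintype κ] (M N : Matrix ι κ F) : (M + N).rank ≤ M.rank + N.rank := by
  rw [rank, mulVecLin_add]
  exact (Submodule.finrank_mono (LinearMap.range_add_le _ _)).trans
    (Submodule.finrank_add_le_finrank_add_finrank _ _)

variable [Fintype ι]

/-- The row space of a matrix. -/
abbrev rowSpace (M : Matrix ι κ F) : Submodule F (κ → F) :=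
  LinearMap.range M.vecMulLinear

theorem rowSpace_mul_le {σ : Type*} [Fintype σ] (A : Matrix σ ι F) (M : Matrix ι κ F) :
    rowSpace (A * M) ≤ rowSpace M := by
  rintro _ ⟨v, rfl⟩
  exact ⟨v ᵥ* A, by simp only [vecMulLinear_apply, vecMul_vecMul]⟩

theorem rowSpace_add_le (M N : Matrix ι κ F) : rowSpace (M + N) ≤ rowSpace M ⊔ rowSpace N := by
  rintro _ ⟨v, rfl⟩
  simp only [vecMulLinear_apply, vecMul_add]
  exact Submodule.add_mem_sup ⟨v, rfl⟩ ⟨v, rfl⟩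

variable [Fintype κ]

theorem finrank_rowSpace (M : Matrix ι κ F) : Module.finrank F (rowSpace M) = M.rank := by
  rw [rank_eq_finrank_span_row, rowSpace, range_vecMulLinear]

theorem finrank_rowSpace_sup_mul_add_le {σ : Type*} [Fintype σ] (A : Matrix σ ι F)
    (M N : Matrix ι κ F) :
    Module.finrank F ↥(rowSpace M ⊔ rowSpace (A * (M + N))) ≤ M.rank + N.rank := by
  rw [← finrank_rowSpace M, ← finrank_rowSpace N]
  refine (Submodule.finrank_mono (sup_le le_sup_left ?_)).trans
    (Submodule.finrank_add_le_finrank_add_finrank (rowSpace M) (rowSpace N))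
  exact (rowSpace_mul_le A _).trans (rowSpace_add_le M N)

variable [DecidableEq κ]

theorem exists_GL_forall_vecMul_eq {σ : Type*} {v w : σ → κ → F} (hv : LinearIndependent F v)
    (hw : LinearIndependent F w) : ∃ S : GL κ F, ∀ i, v i ᵥ* (S : Matrix κ κ F) = w i := by
  obtain ⟨g, hg⟩ := exists_linearEquiv_forall_apply_eq hv hw
  have hdet : IsUnit (LinearMap.toMatrix' g.toLinearMap)ᵀ.det := by
    rw [det_transpose, LinearMap.det_toMatrix']
    exact g.isUnit_det'
  refine ⟨GeneralLinearGroup.mk'' _ hdet, fun i => ?_⟩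
  rw [← hg]
  exact (vecMul_transpose _ _).trans (LinearMap.toMatrix'_mulVec _ _)

theorem exists_GL_vecMul_eq {v w : κ → F} (hv : v ≠ 0) (hw : w ≠ 0) :
    ∃ S : GL κ F, v ᵥ* (S : Matrix κ κ F) = w := by
  obtain ⟨S, hS⟩ := exists_GL_forall_vecMul_eq (σ := Unit) (v := fun _ => v) (w := fun _ => w)
    (linearIndependent_unique_iff.2 hv) (linearIndependent_unique_iff.2 hw)
  exact ⟨S, hS ()⟩

theorem vecMul_mem_rowSpace_mul (S : GL κ F) {M : Matrix ι κ F} {v : κ → F} :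
    v ᵥ* (S : Matrix κ κ F) ∈ rowSpace (M * (S : Matrix κ κ F)) ↔ v ∈ rowSpace M := by
  have hinj : Function.Injective fun u : κ → F => u ᵥ* (S : Matrix κ κ F) :=
    vecMul_injective_of_isUnit S.isUnit
  simp only [LinearMap.mem_range, vecMulLinear_apply, ← vecMul_vecMul, hinj.eq_iff]

end RowSpace

section RankSet

open Matrix
open scoped MatrixGroups

variable {ι κ F : Type*} [Fintype ι] [Fintype κ] [DecidableEq ι] [DecidableEq κ]
  [Field F] [Fintype F] {k : ℕ}

variable (ι κ F k) in
open Classical in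
/-- The matrices of rank `k`. -/
noncomputable def rankSet : Finset (Matrix ι κ F) := {M | M.rank = k}

@[simp]
theorem mem_rankSet {M : Matrix ι κ F} : M ∈ rankSet ι κ F k ↔ M.rank = k := by
  simp [rankSet]

theorem natCard_rank_eq : Nat.card {M : Matrix ι κ F // M.rank = k} = (rankSet ι κ F k).card := by
  classical
  rw [Nat.card_eq_fintype_card, Fintype.card_subtype, rankSet]

theorem rankSet_nonempty (hι : k ≤ Fintype.card ι) (hκ : k ≤ Fintype.card κ) :
    (rankSet ι κ F k).Nonempty := by
  obtain ⟨e⟩ := Function.Embedding.nonempty_of_card_le (α := Fin k) (by simpa using hι)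
  obtain ⟨e'⟩ := Function.Embedding.nonempty_of_card_le (α := Fin k) (by simpa using hκ)
  let A : Matrix ι (Fin k) F := (1 : Matrix ι ι F).submatrix id e
  let B : Matrix (Fin k) κ F := (1 : Matrix κ κ F).submatrix e' id
  have hAB : (A * B).submatrix e e' = 1 := by
    rw [submatrix_mul _ _ e id e' Function.bijective_id]
    simp [A, B, submatrix_submatrix]
  refine ⟨A * B, mem_rankSet.2 (le_antisymm ?_ ?_)⟩
  · simpa using (rank_mul_le_left A B).trans (rank_le_card_width A)
  · simpa [hAB] using (A * B).rank_submatrix_le e e'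

theorem sum_rankSet_mul_right {M : Type*} [AddCommMonoid M] (S : GL κ F) (f : Matrix ι κ F → M) :
    ∑ W ∈ rankSet ι κ F k, f (W * (S : Matrix κ κ F)) = ∑ W ∈ rankSet ι κ F k, f W := by
  refine Finset.sum_bij' (fun W _ => W * (S : Matrix κ κ F))
    (fun W _ => W * (S⁻¹ : GL κ F).val) ?_ ?_ ?_ ?_ fun _ _ => rfl
  all_goals
    simp only [mem_rankSet, rank_mul_GL, Matrix.mul_assoc, Units.mul_inv, Units.inv_mul,
      Matrix.mul_one, imp_self, implies_true]

theorem sum_rankSet_mul_left {M : Type*} [AddCommMonoid M] (S : GL ι F) (f : Matrix ι κ F → M) :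
    ∑ W ∈ rankSet ι κ F k, f ((S : Matrix ι ι F) * W) = ∑ W ∈ rankSet ι κ F k, f W := by
  refine Finset.sum_bij' (fun W _ => (S : Matrix ι ι F) * W)
    (fun W _ => (S⁻¹ : GL ι F).val * W) ?_ ?_ ?_ ?_ fun _ _ => rfl
  all_goals
    simp only [mem_rankSet, rank_GL_mul, ← Matrix.mul_assoc, Units.mul_inv, Units.inv_mul,
      Matrix.one_mul, imp_self, implies_true]

open Classical in
theorem card_rankSet_frame_mem_rowSpace_congr {b : ℕ} {v w : Fin b → κ → F}
    (hv : LinearIndependent F v) (hw : LinearIndependent F w) :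
    {X ∈ rankSet ι κ F k | ∀ i, v i ∈ rowSpace X}.card =
      {X ∈ rankSet ι κ F k | ∀ i, w i ∈ rowSpace X}.card := by
  obtain ⟨S, hS⟩ := exists_GL_forall_vecMul_eq hv hw
  simp only [Finset.card_filter, ← hS]
  rw [← sum_rankSet_mul_right S fun X =>
    if ∀ i, v i ᵥ* (S : Matrix κ κ F) ∈ rowSpace X then 1 else 0]
  simp only [vecMul_mem_rowSpace_mul]

open Classical in
theorem sum_card_frames_rowSpace_inf (U : Submodule F (κ → F)) (b : ℕ) :
    ∑ X ∈ rankSet ι κ F k, (frames (rowSpace X ⊓ U) b).card =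
      ∑ v ∈ frames U b, {X ∈ rankSet ι κ F k | ∀ i, v i ∈ rowSpace X}.card := by
  have hfilter (X : Matrix ι κ F) :
      frames (rowSpace X ⊓ U) b = {v ∈ frames U b | ∀ i, v i ∈ rowSpace X} := by
    ext v
    rw [inf_comm, mem_frames_inf, Finset.mem_filter]
  simp only [hfilter]
  exact Finset.sum_card_bipartiteAbove_eq_sum_card_bipartiteBelow _

local notation "q" => (Fintype.card F : ℝ)

theorem sum_frameCount_rowSpace_inf_mul (U : Submodule F (κ → F)) (b : ℕ) :
    (∑ X ∈ rankSet ι κ F k, frameCount q (Module.finrank F ↥(rowSpace X ⊓ U)) b) *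
        frameCount q (Fintype.card κ) b =
      (rankSet ι κ F k).card * (frameCount q k b * frameCount q (Module.finrank F U) b) := by
  classical
  let N (v : Fin b → κ → F) := {X ∈ rankSet ι κ F k | ∀ i, v i ∈ rowSpace X}.card
  have hcount : (∑ X ∈ rankSet ι κ F k, (frames (rowSpace X ⊓ U) b).card) *
      (frames (⊤ : Submodule F (κ → F)) b).card =
        (frames U b).card * ∑ X ∈ rankSet ι κ F k, (frames (rowSpace X ⊓ ⊤) b).card :=
    calc _ = ∑ v ∈ frames U b, ∑ _w ∈ frames (⊤ : Submodule F (κ → F)) b, N v := by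
          simp only [sum_card_frames_rowSpace_inf U, Finset.sum_const, smul_eq_mul,
            ← Finset.mul_sum, N]
          exact mul_comm _ _
      _ = ∑ _v ∈ frames U b, ∑ w ∈ frames (⊤ : Submodule F (κ → F)) b, N w :=
          Finset.sum_congr rfl fun v hv => Finset.sum_congr rfl fun w hw =>
            card_rankSet_frame_mem_rowSpace_congr (mem_frames.1 hv).1 (mem_frames.1 hw).1
      _ = _ := by
          rw [Finset.sum_const, smul_eq_mul, sum_card_frames_rowSpace_inf]
  have hrank : ∑ X ∈ rankSet ι κ F k, frameCount q (Module.finrank F (rowSpace X)) b =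
      (rankSet ι κ F k).card * frameCount q k b := by
    rw [← nsmul_eq_mul, ← Finset.sum_const]
    refine Finset.sum_congr rfl fun X hX => ?_
    rw [finrank_rowSpace, mem_rankSet.1 hX]
  have hcast := congrArg (Nat.cast : ℕ → ℝ) hcount
  simp only [Nat.cast_mul, Nat.cast_sum, card_frames, inf_top_eq, hrank, finrank_top,
    Module.finrank_fintype_fun_eq_card] at hcast
  rw [hcast]
  ring

theorem expect_frameRatio_rowSpace_le_one (U : Submodule F (κ → F)) (b : ℕ) :
    𝔼 X ∈ rankSet ι κ F k, frameRatio (rowSpace X) U b ≤ 1 := by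
  have hratio : ∀ X ∈ rankSet ι κ F k, frameRatio (rowSpace X) U b =
      frameCount q (Module.finrank F ↥(rowSpace X ⊓ U)) b * frameCount q (Fintype.card κ) b /
        (frameCount q k b * frameCount q (Module.finrank F U) b) := fun X hX => by
    rw [frameRatio, finrank_rowSpace, mem_rankSet.1 hX, Module.finrank_fintype_fun_eq_card]
  rw [Finset.expect_eq_sum_div_card, Finset.sum_congr rfl hratio, ← Finset.sum_div,
    ← Finset.sum_mul, sum_frameCount_rowSpace_inf_mul, div_div, mul_comm (_ * _) (Nat.cast _)]
  exact div_self_le_one _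

end RankSet

section RandomRank

open Matrix
open scoped MatrixGroups

variable {ι κ F : Type*} [Fintype ι] [Fintype κ] [DecidableEq ι] [Field F] [Fintype F]

local notation "q" => (Fintype.card F : ℝ)

open Classical in
theorem card_vecMul_eq_zero (M : Matrix ι κ F) :
    ({v | v ᵥ* M = 0} : Finset (ι → F)).card = Fintype.card F ^ (Fintype.card ι - M.rank) := by
  have hdim := LinearMap.finrank_range_add_finrank_ker M.vecMulLinear
  rw [finrank_rowSpace, Module.finrank_fintype_fun_eq_card] at hdim
  rw [← hdim, Nat.add_sub_cancel_left, ← Module.card_eq_pow_finrank, ← Fintype.card_subtype]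
  exact Fintype.card_congr (Equiv.refl _)

theorem sub_one_div_sub_one_le_div {a b : ℝ} (ha : 0 ≤ a) (hab : a ≤ b) (hb : 1 ≤ b) :
    (a - 1) / (b - 1) ≤ a / b := by
  obtain rfl | hb := hb.eq_or_lt
  · simpa using ha
  · rw [div_le_div_iff₀ (by linarith) (by linarith)]
    linarith

variable [DecidableEq κ] {t : ℕ}

open Classical in
theorem card_rankSet_vecMul_eq_zero_mul {v : ι → F} (hv : v ≠ 0) :
    (Fintype.card F ^ Fintype.card ι - 1) * {W ∈ rankSet ι κ F t | v ᵥ* W = 0}.card =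
      (rankSet ι κ F t).card * (Fintype.card F ^ (Fintype.card ι - t) - 1) := by
  rw [← Fintype.card_fun, ← Finset.card_univ, ← Finset.card_erase_of_mem (Finset.mem_univ 0)]
  refine Finset.card_mul_eq_card_mul (fun (w : ι → F) W => w ᵥ* W = 0) (fun w hw => ?_)
    fun W hW => ?_
  · obtain ⟨S, hS⟩ := exists_GL_vecMul_eq (Finset.ne_of_mem_erase hw) hv
    rw [Finset.bipartiteAbove, Finset.card_filter, Finset.card_filter, ← sum_rankSet_mul_left S]
    simp only [← vecMul_vecMul, hS]
  · rw [Finset.bipartiteBelow, Finset.filter_erase, Finset.card_erase_of_mem (by simp),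
      card_vecMul_eq_zero, mem_rankSet.1 hW]

open Classical in
theorem card_rankSet_vecMul_eq_zero_le {v : ι → F} (hv : v ≠ 0) :
    ({W ∈ rankSet ι κ F t | v ᵥ* W = 0}.card : ℝ) ≤
      (rankSet ι κ F t).card * (q ^ (Fintype.card ι - t) / q ^ Fintype.card ι) := by
  have hq : 1 < q := one_lt_two.trans_le two_le_card
  obtain ⟨i, -⟩ := Function.ne_iff.1 hv
  have hι : Fintype.card ι ≠ 0 := (Fintype.card_pos_iff.2 ⟨i⟩).ne'
  have hcount := congrArg (Nat.cast : ℕ → ℝ) (card_rankSet_vecMul_eq_zero_mul (κ := κ) (t := t) hv)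
  have hone j : 1 ≤ Fintype.card F ^ j := Nat.one_le_pow _ _ Fintype.card_pos
  push_cast [hone] at hcount
  rw [mul_comm, ← eq_div_iff (sub_pos.2 (one_lt_pow₀ hq hι)).ne', mul_div_assoc] at hcount
  rw [hcount]
  refine mul_le_mul_of_nonneg_left ?_ (Nat.cast_nonneg _)
  exact sub_one_div_sub_one_le_div (by positivity) (pow_le_pow_right₀ hq.le (Nat.sub_le _ _))
    (one_le_pow₀ hq.le)

open Classical in
theorem card_rankSet_vecMul_eq_le (v : ι → F) {u : κ → F} (hu : u ≠ 0) :
    ({W ∈ rankSet ι κ F t | v ᵥ* W = u}.card : ℝ) ≤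
      (rankSet ι κ F t).card * (1 / (q ^ Fintype.card κ - 1)) := by
  have hq : 1 < q := one_lt_two.trans_le two_le_card
  obtain ⟨j, -⟩ := Function.ne_iff.1 hu
  have hκ : Fintype.card κ ≠ 0 := (Fintype.card_pos_iff.2 ⟨j⟩).ne'
  let N (w : κ → F) := {W ∈ rankSet ι κ F t | v ᵥ* W = w}.card
  have hN : ∀ w ∈ Finset.univ.erase 0, N w = N u := fun w hw => by
    obtain ⟨S, hS⟩ := exists_GL_vecMul_eq (Finset.ne_of_mem_erase hw) hu
    simp only [N, Finset.card_filter]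
    rw [← sum_rankSet_mul_right S fun W => if v ᵥ* W = u then 1 else 0]
    simp only [← hS, ← vecMul_vecMul, (vecMul_injective_of_isUnit S.isUnit).eq_iff]
  have hsum : (Fintype.card F ^ Fintype.card κ - 1) * N u ≤ (rankSet ι κ F t).card :=
    calc _ = ∑ w ∈ Finset.univ.erase 0, N w := by
          rw [Finset.sum_congr rfl hN, Finset.sum_const, smul_eq_mul,
            Finset.card_erase_of_mem (Finset.mem_univ _), Finset.card_univ, Fintype.card_fun]
      _ ≤ ∑ w, N w := Finset.sum_le_sum_of_subset (Finset.erase_subset _ _)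
      _ = (rankSet ι κ F t).card :=
          (Finset.card_eq_sum_card_fiberwise fun _ _ => Finset.mem_coe.2 (Finset.mem_univ _)).symm
  rw [mul_one_div, le_div_iff₀ (sub_pos.2 (one_lt_pow₀ hq hκ)), mul_comm]
  have hone : 1 ≤ Fintype.card F ^ Fintype.card κ := Nat.one_le_pow _ _ Fintype.card_pos
  exact_mod_cast hsum

open Classical in
theorem card_rankSet_vecMul_add_eq_zero_le (X : Matrix ι κ F) {v : ι → F} (hv : v ≠ 0) :
    ({W ∈ rankSet ι κ F t | v ᵥ* (X + W) = 0}.card : ℝ) ≤ (rankSet ι κ F t).card *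
      ((if v ᵥ* X = 0 then q ^ (Fintype.card ι - t) / q ^ Fintype.card ι else 0) +
        1 / (q ^ Fintype.card κ - 1)) := by
  have hq : 1 ≤ q := one_le_two.trans two_le_card
  have hκ : 0 ≤ 1 / (q ^ Fintype.card κ - 1) :=
    one_div_nonneg.2 (sub_nonneg.2 (one_le_pow₀ hq))
  simp only [vecMul_add, add_comm (v ᵥ* X), add_eq_zero_iff_eq_neg]
  split_ifs with hX
  · rw [hX, neg_zero]
    exact (card_rankSet_vecMul_eq_zero_le hv).trans (by gcongr; linarith)
  · rw [zero_add]
    exact card_rankSet_vecMul_eq_le v (neg_ne_zero.2 hX)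

theorem expect_pow_corank_add_le (hικ : Fintype.card ι ≤ Fintype.card κ) (X : Matrix ι κ F) :
    𝔼 W ∈ rankSet ι κ F t, q ^ (Fintype.card ι - (X + W).rank) ≤
      1 + q ^ (Fintype.card ι - X.rank) * (q ^ (Fintype.card ι - t) / q ^ Fintype.card ι) +
        q ^ Fintype.card ι / q ^ Fintype.card κ := by
  classical
  have hq : 1 ≤ q := one_le_two.trans two_le_card
  set R := rankSet ι κ F t
  set ρ := q ^ (Fintype.card ι - t) / q ^ Fintype.card ι
  have hkernel : ∑ v ∈ Finset.univ.erase (0 : ι → F), (if v ᵥ* X = 0 then ρ else 0) ≤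
      q ^ (Fintype.card ι - X.rank) * ρ := by
    calc _ ≤ ∑ v : ι → F, (if v ᵥ* X = 0 then ρ else 0) :=
          Finset.sum_le_sum_of_subset_of_nonneg (Finset.erase_subset _ _) fun _ _ _ => by positivity
      _ = _ := by
          rw [← Finset.sum_filter, Finset.sum_const, card_vecMul_eq_zero, nsmul_eq_mul,
            Nat.cast_pow]
  have hrest : ∑ _v ∈ Finset.univ.erase (0 : ι → F), 1 / (q ^ Fintype.card κ - 1) ≤
      q ^ Fintype.card ι / q ^ Fintype.card κ := by
    have hone : 1 ≤ Fintype.card F ^ Fintype.card ι := Nat.one_le_pow _ _ Fintype.card_pos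
    rw [Finset.sum_const, Finset.card_erase_of_mem (Finset.mem_univ _), Finset.card_univ,
      Fintype.card_fun, nsmul_eq_mul, Nat.cast_sub hone, mul_one_div, Nat.cast_pow, Nat.cast_one]
    exact sub_one_div_sub_one_le_div (by positivity) (pow_le_pow_right₀ hq hικ) (one_le_pow₀ hq)
  rw [Finset.expect_eq_sum_div_card]
  refine div_le_of_le_mul₀ (by positivity) (by positivity) ?_
  calc ∑ W ∈ R, q ^ (Fintype.card ι - (X + W).rank)
      = ∑ v : ι → F, ({W ∈ R | v ᵥ* (X + W) = 0}.card : ℝ) := by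
        norm_cast
        simp only [← card_vecMul_eq_zero]
        exact Finset.sum_card_bipartiteAbove_eq_sum_card_bipartiteBelow _
    _ ≤ R.card + ∑ v ∈ Finset.univ.erase (0 : ι → F), R.card *
          ((if v ᵥ* X = 0 then ρ else 0) + 1 / (q ^ Fintype.card κ - 1)) := by
        rw [← Finset.add_sum_erase _ _ (Finset.mem_univ (0 : ι → F))]
        gcongr with v hv
        · exact Finset.filter_subset _ _
        · exact card_rankSet_vecMul_add_eq_zero_le X (Finset.ne_of_mem_erase hv)
    _ ≤ _ := by
        rw [← Finset.mul_sum, Finset.sum_add_distrib, mul_comm _ (R.card : ℝ)]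
        linear_combination (R.card : ℝ) * hkernel + (R.card : ℝ) * hrest

theorem sub_mul_pow_le_cast_tsub {x : ℝ} (hx : 1 < x) {n k t r : ℕ} (hr : r ≤ k + t)
    (hn : k + t ≤ n) :
    k + 1 / (x - 1) - 1 / ((x - 1) * x ^ (n - (k + t))) * x ^ (n - r) ≤ ((r - t : ℕ) : ℝ) := by
  obtain ⟨d, hd⟩ := Nat.exists_eq_add_of_le hr
  have hx1 : 0 < x - 1 := sub_pos.2 hx
  have hpow : x ^ (n - r) = x ^ (n - (k + t)) * x ^ d := by
    rw [← pow_add]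
    congr 1
    omega
  have hbernoulli : 1 + d * (x - 1) ≤ x ^ d := by
    simpa using one_add_mul_le_pow (a := x - 1) (by linarith) d
  have hdefect : (k : ℝ) - d ≤ ((r - t : ℕ) : ℝ) := by
    have : k ≤ r - t + d := by omega
    rw [sub_le_iff_le_add]
    exact_mod_cast this
  have hratio : 1 / ((x - 1) * x ^ (n - (k + t))) * x ^ (n - r) = x ^ d / (x - 1) := by
    rw [hpow]
    field_simp
  have : d ≤ x ^ d / (x - 1) - 1 / (x - 1) := by
    rw [← sub_div, le_div_iff₀ hx1]
    linarith
  linarith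

theorem sub_three_div_le {x s : ℝ} (hx : 2 ≤ x) (hs : 0 < s) (r : ℝ) :
    r - 3 / (s * x) ≤ r + 1 / (x - 1) - 1 / ((x - 1) * s) * (1 + s + 1 / x) := by
  have hx1 : 0 < x - 1 := by linarith
  have hconst : (1 + 1 / x) / (x - 1) ≤ 3 / x := by
    rw [div_le_div_iff₀ hx1 (by positivity)]
    field_simp
    linarith
  have hexpand : 1 / (x - 1) - 1 / ((x - 1) * s) * (1 + s + 1 / x) =
      -((1 + 1 / x) / (x - 1) / s) := by
    field_simp
    ring
  have : (1 + 1 / x) / (x - 1) / s ≤ 3 / (s * x) := by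
    rw [mul_comm, ← div_div]
    gcongr
  linarith

theorem sub_three_div_pow_le_expect (hικ : Fintype.card ι < Fintype.card κ) {X : Matrix ι κ F}
    (ht : X.rank + t ≤ Fintype.card ι) :
    X.rank - 3 / q ^ (Fintype.card ι - (X.rank + t) + 1) ≤
      𝔼 W ∈ rankSet ι κ F t, (((X + W).rank - t : ℕ) : ℝ) := by
  have hq2 : 2 ≤ q := two_le_card
  set n := Fintype.card ι
  set s := q ^ (n - (X.rank + t))
  have hs : 0 < s := by positivity
  have hne : (rankSet ι κ F t).Nonempty := rankSet_nonempty (by omega) (by omega)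
  have hcorank : 𝔼 W ∈ rankSet ι κ F t, q ^ (n - (X + W).rank) ≤ 1 + s + 1 / q := by
    refine (expect_pow_corank_add_le hικ.le X).trans ?_
    have hpow : q ^ (n - X.rank) * (q ^ (n - t) / q ^ n) = s := by
      rw [mul_div_assoc', div_eq_iff (by positivity), ← pow_add, ← pow_add]
      congr 1
      omega
    have hgap : q ^ n / q ^ Fintype.card κ ≤ 1 / q := by
      rw [div_le_div_iff₀ (by positivity) (by positivity), one_mul, ← pow_succ]
      exact pow_le_pow_right₀ (by linarith) hικ
    rw [hpow]
    linarith
  have hq1 : 0 < q - 1 := by linarith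
  calc X.rank - 3 / (s * q)
      ≤ X.rank + 1 / (q - 1) - 1 / ((q - 1) * s) * (1 + s + 1 / q) :=
        sub_three_div_le hq2 hs X.rank
    _ ≤ X.rank + 1 / (q - 1) -
          1 / ((q - 1) * s) * 𝔼 W ∈ rankSet ι κ F t, q ^ (n - (X + W).rank) := by
        gcongr
    _ = 𝔼 W ∈ rankSet ι κ F t,
          (X.rank + 1 / (q - 1) - 1 / ((q - 1) * s) * q ^ (n - (X + W).rank)) := by
        rw [Finset.expect_sub_distrib, Finset.expect_const hne, Finset.mul_expect]
    _ ≤ _ := Finset.expect_le_expect fun W hW => sub_mul_pow_le_cast_tsub (by linarith)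
        ((rank_add_le X W).trans_eq (by rw [mem_rankSet.1 hW])) ht

end RandomRank

section Channel

open Matrix
open scoped MatrixGroups

variable {F : Type} [Field F] {n m k t : ℕ}

/-- The uniform distribution on the `n × m` matrices of rank `k`. -/
noncomputable def uniformRank (F : Type) [Field F] (n m k : ℕ)
    (X : Matrix (Fin n) (Fin m) F) : ℝ :=
  if X.rank = k then 1 / (Nat.card {M : Matrix (Fin n) (Fin m) F // M.rank = k} : ℝ) else 0

theorem uniformRank_nonneg (X : Matrix (Fin n) (Fin m) F) : 0 ≤ uniformRank F n m k X := by
  unfold uniformRank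
  positivity

theorem rank_eq_of_uniformRank_ne_zero {X : Matrix (Fin n) (Fin m) F}
    (h : uniformRank F n m k X ≠ 0) : X.rank = k := by
  by_contra hX
  exact h (if_neg hX)

variable [Fintype F]

local notation "q" => (Fintype.card F : ℝ)

theorem ammcKernel_nonneg (X Y : Matrix (Fin n) (Fin m) F) : 0 ≤ ammcKernel F n m t X Y := by
  unfold ammcKernel
  positivity

theorem exists_of_ammcKernel_ne_zero {X Y : Matrix (Fin n) (Fin m) F}
    (h : ammcKernel F n m t X Y ≠ 0) :
    ∃ (A : GL (Fin n) F) (W : Matrix (Fin n) (Fin m) F), W.rank = t ∧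
      (A : Matrix (Fin n) (Fin n) F) * (X + W) = Y := by
  have hcard := Nat.cast_ne_zero.1 (div_ne_zero_iff.1 h).1
  obtain ⟨⟨A, W, hW⟩, hAW⟩ := (Nat.card_ne_zero.1 hcard).1
  exact ⟨A, W, hW, hAW⟩

open Classical in
theorem sum_ammcKernel_mul (X : Matrix (Fin n) (Fin m) F) (f : Matrix (Fin n) (Fin m) F → ℝ) :
    ∑ Y, ammcKernel F n m t X Y * f Y = 𝔼 A : GL (Fin n) F,
      𝔼 W ∈ rankSet (Fin n) (Fin m) F t, f ((A : Matrix (Fin n) (Fin n) F) * (X + W)) := by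
  have hcard (Y : Matrix (Fin n) (Fin m) F) :
      (Nat.card {p : GL (Fin n) F × {W : Matrix (Fin n) (Fin m) F // W.rank = t} //
        (p.1 : Matrix (Fin n) (Fin n) F) * (X + (p.2 : Matrix (Fin n) (Fin m) F)) = Y} : ℝ) =
      ∑ A : GL (Fin n) F, ∑ W ∈ rankSet (Fin n) (Fin m) F t,
        if (A : Matrix (Fin n) (Fin n) F) * (X + W) = Y then 1 else 0 := by
    simp only [Finset.sum_subtype (rankSet (Fin n) (Fin m) F t) fun _ => mem_rankSet]
    rw [Nat.card_eq_fintype_card, Fintype.card_subtype, Finset.card_filter, Nat.cast_sum,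
      Fintype.sum_prod_type]
    simp only [Nat.cast_ite, Nat.cast_one, Nat.cast_zero]
  simp only [ammcKernel, hcard, natCard_rank_eq]
  simp only [div_mul_eq_mul_div, ← Finset.sum_div, Finset.sum_mul, ite_mul, one_mul, zero_mul,
    Finset.expect_eq_sum_div_card, Finset.card_univ, Nat.card_eq_fintype_card]
  rw [Finset.sum_comm, mul_comm, ← div_div]
  congr 2
  refine Finset.sum_congr rfl fun A _ => ?_
  rw [Finset.sum_comm]
  simp only [Finset.sum_ite_eq, Finset.mem_univ, if_true]

theorem sum_uniformRank_mul (f : Matrix (Fin n) (Fin m) F → ℝ) :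
    ∑ X, uniformRank F n m k X * f X = 𝔼 X ∈ rankSet (Fin n) (Fin m) F k, f X := by
  classical
  simp only [uniformRank, ite_mul, zero_mul, natCard_rank_eq, ← Finset.sum_filter, rankSet,
    Finset.expect_eq_sum_div_card, one_div_mul_eq_div, Finset.sum_div]

theorem sum_uniformRank (hn : k ≤ n) (hm : k ≤ m) : ∑ X, uniformRank F n m k X = 1 := by
  have h := sum_uniformRank_mul (k := k) fun _ : Matrix (Fin n) (Fin m) F => 1
  rwa [Finset.expect_const (rankSet_nonempty (by simpa using hn) (by simpa using hm)), funext
    fun X => mul_one (uniformRank F n m k X)] at h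

/-- The density in Gibbs' variational principle: an input and an output of the channel are compared
by counting the frames of `rank Y - t` vectors common to their row spaces. -/
noncomputable def channelDensity (t : ℕ) (X Y : Matrix (Fin n) (Fin m) F) : ℝ :=
  frameRatio (rowSpace X) (rowSpace Y) (Y.rank - t)

theorem pow_div_four_le_channelDensity (A : GL (Fin n) F) {X W : Matrix (Fin n) (Fin m) F}
    (hX : X.rank = k) (hW : W.rank = t) :
    q ^ ((m - k - t) * ((X + W).rank - t)) / 4 ≤
      channelDensity t X ((A : Matrix (Fin n) (Fin n) F) * (X + W)) := by
  set Y := (A : Matrix (Fin n) (Fin n) F) * (X + W)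
  have hY : Y.rank = (X + W).rank := rank_GL_mul A (X + W)
  have hsup : Module.finrank F ↥(rowSpace X ⊔ rowSpace Y) ≤ k + t := by
    rw [← hX, ← hW]
    exact finrank_rowSpace_sup_mul_add_le _ X W
  have hsum := Submodule.finrank_sup_add_finrank_inf_eq (rowSpace X) (rowSpace Y)
  rw [finrank_rowSpace, finrank_rowSpace] at hsum
  rw [← hY, channelDensity]
  refine le_trans ?_ (pow_div_four_le_frameRatio (by omega))
  rw [Module.finrank_fin_fun]
  have hexponent : m - k - t ≤ m - Module.finrank F ↥(rowSpace X ⊔ rowSpace Y) := by omega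
  gcongr
  exact one_le_two.trans two_le_card

theorem sub_logb_four_le_logb_channelDensity (A : GL (Fin n) F) {X W : Matrix (Fin n) (Fin m) F}
    (hX : X.rank = k) (hW : W.rank = t) :
    ((m - k - t : ℕ) : ℝ) * ((X + W).rank - t : ℕ) - Real.logb q 4 ≤
      Real.logb q (channelDensity t X ((A : Matrix (Fin n) (Fin n) F) * (X + W))) := by
  have hq : 1 < q := one_lt_two.trans_le two_le_card
  have h := Real.logb_le_logb_of_le hq (by positivity) (pow_div_four_le_channelDensity A hX hW)
  rwa [Real.logb_div (by positivity) (by norm_num), Real.logb_pow, Real.logb_self_eq_one hq,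
    mul_one, Nat.cast_mul] at h

theorem sub_logb_four_le_mutualInfoB (hkn : k ≤ n) (htn : t ≤ n) (hkt : k + t ≤ m) {r : ℝ}
    (hr : ∀ X : Matrix (Fin n) (Fin m) F, X.rank = k →
      r ≤ 𝔼 W ∈ rankSet (Fin n) (Fin m) F t, (((X + W).rank - t : ℕ) : ℝ)) :
    ((m - k - t : ℕ) : ℝ) * r - Real.logb q 4 ≤
      mutualInfoB q (uniformRank F n m k) (ammcKernel F n m t) := by
  classical
  have hq : 1 < q := one_lt_two.trans_le two_le_card
  have hk : (rankSet (Fin n) (Fin m) F k).Nonempty :=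
    rankSet_nonempty (by simpa using hkn) (by rw [Fintype.card_fin]; omega)
  have ht : (rankSet (Fin n) (Fin m) F t).Nonempty :=
    rankSet_nonempty (by simpa using htn) (by rw [Fintype.card_fin]; omega)
  calc ((m - k - t : ℕ) : ℝ) * r - Real.logb q 4
      ≤ 𝔼 X ∈ rankSet (Fin n) (Fin m) F k, 𝔼 A : GL (Fin n) F,
          𝔼 W ∈ rankSet (Fin n) (Fin m) F t,
            Real.logb q (channelDensity t X ((A : Matrix (Fin n) (Fin n) F) * (X + W))) := by
        refine Finset.le_expect hk fun X hX => Finset.le_expect Finset.univ_nonempty fun A _ =>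
          le_trans ?_ (Finset.expect_le_expect fun W hW =>
            sub_logb_four_le_logb_channelDensity A (mem_rankSet.1 hX) (mem_rankSet.1 hW))
        rw [Finset.expect_sub_distrib, Finset.expect_const ht, ← Finset.mul_expect]
        gcongr
        exact hr X (mem_rankSet.1 hX)
    _ = ∑ X, ∑ Y, uniformRank F n m k X * ammcKernel F n m t X Y *
          Real.logb q (channelDensity t X Y) := by
        simp only [mul_assoc, ← Finset.mul_sum, sum_ammcKernel_mul, sum_uniformRank_mul]
    _ ≤ _ := by
        refine sum_mul_logb_le_mutualInfoB hq uniformRank_nonneg ammcKernel_nonneg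
          (fun X Y => frameRatio_nonneg _ _ _) (fun X Y hX hY => ?_) fun Y => ?_
        · obtain ⟨A, W, hW, rfl⟩ := exists_of_ammcKernel_ne_zero hY
          have hX := rank_eq_of_uniformRank_ne_zero hX
          exact (pow_div_four_le_channelDensity A hX hW).trans_lt' (by positivity) |>.ne'
        · rw [sum_uniformRank_mul]
          exact expect_frameRatio_rowSpace_le_one (rowSpace Y) _

end Channel

section Rate

theorem three_le_sub_one_mul_add_four_div_rpow {a y : ℝ} (ha : 1 ≤ a) (hy0 : 0 ≤ y) (hy1 : y ≤ 1) :
    3 ≤ (a - 1) * y + 4 / a ^ y := by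
  have hbernoulli : a ^ y ≤ 1 + (a - 1) * y := by
    simpa [mul_comm] using rpow_one_add_le_one_add_mul_self (s := a - 1) (by linarith) hy0 hy1
  have hamgm : 4 ≤ a ^ y + 4 / a ^ y := by
    have : a ^ y + 4 / a ^ y - 4 = (a ^ y - 2) ^ 2 / a ^ y := by
      field_simp
      ring
    have : 0 ≤ (a ^ y - 2) ^ 2 / a ^ y := by positivity
    linarith
  linarith

theorem mul_three_div_pow_le {a : ℝ} (ha : 2 ≤ a) (j : ℕ) : j * (3 / a ^ (j + 1)) ≤ j := by
  obtain rfl | hj := Nat.eq_zero_or_pos j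
  · simp
  refine mul_le_of_le_one_right (Nat.cast_nonneg j) ((div_le_one (by positivity)).2 ?_)
  calc (3 : ℝ) ≤ 2 ^ 2 := by norm_num
    _ ≤ a ^ 2 := by gcongr
    _ ≤ a ^ (j + 1) := pow_le_pow_right₀ (by linarith) (by omega)

theorem mul_sub_sub_div_rpow_le {a D P k y : ℝ} (ha : 2 ≤ a) (hD : 0 ≤ D) (hP : 4 * D ≤ P)
    (hk : 1 ≤ k) (hy0 : 0 ≤ y) (hy1 : y ≤ 1) (j : ℕ) :
    D * (k - y) - P / a ^ (1 + j + y) ≤ (D + j) * (k - 3 / a ^ (j + 1)) := by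
  set s := 1 / a ^ (j + 1)
  have hsa : (a - 1) * s ≤ 1 := by
    rw [mul_one_div, div_le_one (by positivity)]
    linarith [le_self_pow₀ (by linarith : 1 ≤ a) j.add_one_ne_zero]
  have hloss : P / a ^ (1 + j + y) = P * (s / a ^ y) := by
    rw [Real.rpow_add (by positivity), add_comm, ← Nat.cast_add_one, Real.rpow_natCast, div_div,
      mul_one_div]
  have hmean : 3 * s ≤ y + 4 * (s / a ^ y) :=
    calc 3 * s ≤ ((a - 1) * y + 4 / a ^ y) * s := by
          gcongr
          exact three_le_sub_one_mul_add_four_div_rpow (by linarith) hy0 hy1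
      _ = (a - 1) * s * y + 4 * (s / a ^ y) := by ring
      _ ≤ y + 4 * (s / a ^ y) := by
          gcongr
          exact mul_le_of_le_one_left hy0 hsa
  have hgap : D * (3 * s) ≤ D * y + P * (s / a ^ y) :=
    calc D * (3 * s) ≤ D * (y + 4 * (s / a ^ y)) := by gcongr
      _ = D * y + 4 * D * (s / a ^ y) := by ring
      _ ≤ D * y + P * (s / a ^ y) := by gcongr
  have hj : j * (3 * s) ≤ j * k :=
    calc j * (3 * s) = j * (3 / a ^ (j + 1)) := by rw [mul_one_div]
      _ ≤ j := mul_three_div_pow_le ha j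
      _ ≤ j * k := le_mul_of_one_le_right (Nat.cast_nonneg j) hk
  rw [hloss, ← mul_one_div 3]
  linarith

open Matrix

variable {F : Type} [Field F] [Fintype F] {n m k t j : ℕ} {y : ℝ}

local notation "q" => (Fintype.card F : ℝ)

theorem exists_le_expect_and_rate_le (hnm : n ≤ m) (hn : k + t + j = n) (hy0 : 0 ≤ y)
    (hy1 : y ≤ 1) :
    ∃ r : ℝ, (∀ X : Matrix (Fin n) (Fin m) F, X.rank = k →
        r ≤ 𝔼 W ∈ rankSet (Fin n) (Fin m) F t, (((X + W).rank - t : ℕ) : ℝ)) ∧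
      ((m : ℝ) - n) * (k - y) - 2 * t * n * m / q ^ (1 + j + y) ≤ ((m : ℝ) - n + j) * r := by
  have hD : 0 ≤ (m : ℝ) - n := sub_nonneg.2 (Nat.cast_le.2 hnm)
  have hDy : 0 ≤ ((m : ℝ) - n) * y := mul_nonneg hD hy0
  have hloss : 0 ≤ 2 * t * n * m / q ^ (1 + j + y) := by positivity
  by_cases hdeg : k = 0 ∨ n = m
  · refine ⟨0, fun X _ => Finset.expect_nonneg fun W _ => Nat.cast_nonneg _, ?_⟩
    have hDk : ((m : ℝ) - n) * k = 0 := by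
      obtain rfl | rfl := hdeg <;> simp
    linarith
  obtain rfl | ht := Nat.eq_zero_or_pos t
  · refine ⟨k, fun X hX => Finset.le_expect (rankSet_nonempty (by simp) (by simp)) fun W hW => ?_,
      ?_⟩
    · simp [eq_zero_of_rank_eq_zero (mem_rankSet.1 hW), hX]
    · have : (0 : ℝ) ≤ j * k := by positivity
      linarith
  · refine ⟨_, fun X hX => ?_, mul_sub_sub_div_rpow_le two_le_card hD ?_ ?_ hy0 hy1 j⟩
    · have h := sub_three_div_pow_le_expect (X := X) (t := t) (by simp; omega) (by simp; omega)
      rw [hX, Fintype.card_fin, Nat.sub_eq_of_eq_add' hn.symm] at h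
      exact h
    · have htn : 2 ≤ t * n := by nlinarith [show 1 ≤ k by omega]
      calc 4 * ((m : ℝ) - n) ≤ 2 * (2 : ℕ) * m := by push_cast; linarith [n.cast_nonneg (α := ℝ)]
        _ ≤ 2 * ((t * n : ℕ) : ℝ) * m := by gcongr
        _ = 2 * t * n * m := by push_cast; ring
    · exact_mod_cast (show 1 ≤ k by omega)

theorem rate_le_mutualInfoB_uniformRank {x : ℝ} (hnm : n ≤ m) (hx : 0 ≤ x)
    (hn : k + t + ⌊x⌋₊ = n) :
    ((m : ℝ) - n) * (n - t - x) - Real.logb q 4 - 2 * t * n * m / q ^ (1 + x) ≤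
      mutualInfoB q (uniformRank F n m k) (ammcKernel F n m t) := by
  obtain ⟨r, hr, hrate⟩ := exists_le_expect_and_rate_le (F := F) hnm hn
    (sub_nonneg.2 (Nat.floor_le hx)) (sub_le_iff_le_add'.2 (Nat.lt_floor_add_one x).le)
  have hinfo := sub_logb_four_le_mutualInfoB (by omega) (by omega) (by omega) hr
  have hgap : ((m - k - t : ℕ) : ℝ) = m - n + ⌊x⌋₊ := by
    rw [← Nat.cast_sub hnm]
    norm_cast
    omega
  have hdim : (n : ℝ) - t - x = k - (x - ⌊x⌋₊) := by
    rw [← hn]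
    push_cast
    ring
  rw [add_assoc, add_sub_cancel, ← hdim] at hrate
  rw [hgap] at hinfo
  linarith

end Rate

/-- for `n ≤ m` and any `ε ≥ 0` with `(1+ε)t ≤ n`, the capacity (in `q`-ary
units) of the additive-multiplicative matrix channel is lower bounded by
`C ≥ (m-n)(n - t - εt) - log_q 4 - 2tnm/q^{1+εt}`; this bound is achieved by choosing `X`
uniformly among the `n × m` matrices of rank `n - (1+ε)t`. -/
theorem stmt_17 (F : Type) [Field F] [Fintype F] (n m t : ℕ) (ε : ℝ)
    (hnm : n ≤ m) (hε : 0 ≤ ε) (hεt : (1 + ε) * t ≤ n) :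
    capacityB (Fintype.card F) (ammcKernel F n m t)
      ≥ ((m : ℝ) - n) * ((n : ℝ) - t - ε * t) -
          Real.logb (Fintype.card F) 4 -
          2 * t * n * m / (Fintype.card F : ℝ) ^ (1 + ε * t) ∧
    ∀ k : ℕ, (k : ℝ) = (n : ℝ) - (1 + ε) * t →
      mutualInfoB (Fintype.card F)
          (fun X : Matrix (Fin n) (Fin m) F =>
            if X.rank = k
            then 1 / (Nat.card {M : Matrix (Fin n) (Fin m) F // M.rank = k} : ℝ)
            else 0)
          (ammcKernel F n m t)
        ≥ ((m : ℝ) - n) * ((n : ℝ) - t - ε * t) -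
            Real.logb (Fintype.card F) 4 -
            2 * t * n * m / (Fintype.card F : ℝ) ^ (1 + ε * t) := by
  have hx : 0 ≤ ε * t := by positivity
  constructor
  · have hfloor : t + ⌊ε * t⌋₊ ≤ n := by
      have : (t : ℝ) + ⌊ε * t⌋₊ ≤ n := by linarith [Nat.floor_le hx]
      exact_mod_cast this
    obtain ⟨k, hk⟩ := Nat.exists_eq_add_of_le' hfloor
    exact (rate_le_mutualInfoB_uniformRank (k := k) hnm hx (by omega)).trans <|
      mutualInfoB_le_capacityB (one_lt_two.trans_le two_le_card) uniformRank_nonneg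
        (sum_uniformRank (by omega) (by omega)) ammcKernel_nonneg
  · intro k hk
    have hfloor : ⌊ε * t⌋₊ + (k + t) = n := by
      rw [← Nat.floor_add_natCast hx, ← Nat.floor_natCast (R := ℝ) n]
      congr 1
      push_cast
      linarith
    exact rate_le_mutualInfoB_uniformRank hnm hx (by omega)
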